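/- Let [a,b] be a nondegenerate compact interval. The family 𝒜ℳ𝒲 is strongly 𝔠-algebrable: there exists a set B ⊂ C([a,b])^ℕ of cardinality the continuum 𝔠 such that for every N ∈ ℕ, every nonzero real polynomial P in N variables with zero constant term, and all pairwise distinct b₁,…,b_N ∈ B, the sequence P(b₁,…,b_N) (computed with coordinatewise operations in C([a,b])^ℕ) is a nonzero element of 𝒜ℳ𝒲. -/

import Mathlib

open Filter Topology

/-- Anti M-Weierstrass sequences. -/
def AntiMW (a b : ℝ) (f : ℕ → C(Set.Icc a b, ℝ)) : Prop :=
  (∀ x : Set.Icc a b, Summable fun n => |f n x|) ∧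
  (∃ S : Set.Icc a b → ℝ,
    TendstoUniformly (fun N x => ∑ n ∈ Finset.range N, f n x) S atTop) ∧
  ¬ Summable fun n => ‖f n‖

/-!
Choose continuous bumps `φ₀, φ₁, …` with values in `[0, 1]`, pairwise disjoint supports and peak
value `1`, and put `f_s := (log n ^ s • φ n)ₙ` for negative exponents `s` taken, up to sign, from a
Hamel basis of `ℝ` over `ℚ`. A polynomial `P` without constant term in such sequences still has
pairwise disjoint supports and its terms tend to `0` in norm, so its series converges absolutely
and uniformly. At the peak of `φ n` its `n`-th term is `P` evaluated at powers of `log n`. Linear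
independence of the exponents over the semiring `ℕ` says exactly that distinct monomials have
distinct total exponents, so one power of `log n` dominates; the norms are not summable since no
power of `log n` is.
-/

open Asymptotics Cardinal

lemma exists_ge_tsum_sub_sum_range_eq {E : Type*} [AddCommGroup E] [TopologicalSpace E]
    [IsTopologicalAddGroup E] [T2Space E] {u : ℕ → E} (hu : (Function.support u).Subsingleton)
    (N : ℕ) :
    ∃ k ≥ N, ∑' n, u n - ∑ n ∈ Finset.range N, u n = u k := by
  have hsum : Summable u := summable_of_hasFiniteSupport hu.finite
  have htail : ∑' n, u n - ∑ n ∈ Finset.range N, u n = ∑' n, u (n + N) :=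
    sub_eq_of_eq_add' (hsum.sum_add_tsum_nat_add N).symm
  rw [htail]
  by_cases h : ∃ k, u (k + N) ≠ 0
  · obtain ⟨k, hk⟩ := h
    refine ⟨k + N, Nat.le_add_left N k, tsum_eq_single k fun n hn => ?_⟩
    by_contra hne
    exact hn (Nat.add_right_cancel (hu hne hk))
  · push Not at h
    exact ⟨N, le_rfl, by simpa [h] using (h 0).symm⟩

lemma tendstoUniformly_sum_range_of_subsingleton_support {X E : Type*}
    [NormedAddCommGroup E] {f : ℕ → X → E}
    (hsupp : ∀ x, (Function.support fun n => f n x).Subsingleton)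
    (hf : TendstoUniformly f 0 atTop) :
    TendstoUniformly (fun N x => ∑ n ∈ Finset.range N, f n x) (fun x => ∑' n, f n x) atTop := by
  rw [Metric.tendstoUniformly_iff] at hf ⊢
  intro ε hε
  obtain ⟨N₀, hN₀⟩ := eventually_atTop.1 (hf ε hε)
  filter_upwards [eventually_ge_atTop N₀] with N hN x
  obtain ⟨k, hk, htail⟩ := exists_ge_tsum_sub_sum_range_eq (hsupp x) N
  simpa [dist_eq_norm, htail] using hN₀ k (hN.trans hk) x

section NoConstantTerm

variable {σ R A : Type*} [CommSemiring R] [CommSemiring A] [Algebra R A] {P : MvPolynomial σ R}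

lemma aeval_zero_eq_zero_of_coeff_zero (hP : P.coeff 0 = 0) :
    MvPolynomial.aeval (0 : σ → A) P = 0 := by
  rw [MvPolynomial.aeval_zero, MvPolynomial.constantCoeff_eq, hP, map_zero]

lemma tendsto_aeval_zero_of_coeff_zero [TopologicalSpace A] [IsTopologicalSemiring A]
    (hP : P.coeff 0 = 0) {α : Type*} {l : Filter α} {u : σ → α → A}
    (hu : ∀ i, Tendsto (u i) l (𝓝 0)) :
    Tendsto (fun n => MvPolynomial.aeval (fun i => u i n) P) l (𝓝 0) := by
  have hcont : Continuous fun y : σ → A => MvPolynomial.aeval y P := by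
    simpa only [MvPolynomial.eval_map, MvPolynomial.aeval_def] using
      MvPolynomial.continuous_eval (P.map (algebraMap R A))
  have hlim := (hcont.tendsto 0).comp (tendsto_pi_nhds.2 hu)
  rwa [aeval_zero_eq_zero_of_coeff_zero hP] at hlim

end NoConstantTerm

lemma injective_of_forall_aeval_ne_zero {σ R A : Type*} [CommRing R] [Nontrivial R] [CommRing A]
    [Algebra R A] {f : σ → A}
    (hf : ∀ P : MvPolynomial σ R, P ≠ 0 → P.coeff 0 = 0 → MvPolynomial.aeval f P ≠ 0) :
    Function.Injective f := by
  intro i j hij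
  by_contra hne
  refine hf (MvPolynomial.X i - MvPolynomial.X j) ?_ (by simp) (by simp [hij])
  exact sub_ne_zero.2 ((MvPolynomial.X_injective (R := R)).ne hne)

lemma linearIndependent_of_eq_or_eq_neg {ι R M : Type*} [Ring R] [AddCommGroup M] [Module R M]
    {v w : ι → M} (hv : LinearIndependent R v) (hw : ∀ i, w i = v i ∨ w i = -v i) :
    LinearIndependent R w := by
  have hunit : ∀ i, ∃ u : Rˣ, u • v i = w i := fun i =>
    (hw i).elim (fun h => ⟨1, by simp [h]⟩) fun h => ⟨-1, by simp [h, Units.smul_def]⟩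
  choose u hu using hunit
  exact (funext hu : u • v = w) ▸ hv.units_smul u

lemma exists_linearIndependent_nat_neg_card_eq_continuum :
    ∃ (ι : Type) (c : ι → ℝ), #ι = 𝔠 ∧ LinearIndependent ℕ c ∧ ∀ i, c i < 0 := by
  let H := Module.Basis.ofVectorSpace ℚ ℝ
  have hcard : #(Module.Basis.ofVectorSpaceIndex ℚ ℝ) = 𝔠 :=
    H.mk_eq_rank''.trans Real.rank_rat_real
  have hind : LinearIndependent ℚ fun i => -|H i| :=
    linearIndependent_of_eq_or_eq_neg H.linearIndependent fun i =>
      (abs_choice (H i)).elim (fun h => .inr (by rw [h])) fun h => .inl (by rw [h, neg_neg])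
  exact ⟨_, fun i => -|H i|, hcard, hind.restrict_scalars' ℕ,
    fun i => neg_lt_zero.2 (abs_pos.2 (H.ne_zero i))⟩

section Asymptotics

lemma isLittleO_rpow_rpow_atTop {p q : ℝ} (hpq : p < q) :
    (fun t : ℝ => t ^ p) =o[atTop] fun t => t ^ q := by
  refine isLittleO_of_tendsto' ?_ ?_
  · filter_upwards [eventually_gt_atTop 0] with t ht h
    exact absurd h (Real.rpow_pos_of_pos ht q).ne'
  · refine (tendsto_rpow_neg_atTop (sub_pos.2 hpq)).congr' ?_
    filter_upwards [eventually_gt_atTop 0] with t ht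
    rw [neg_sub, Real.rpow_sub ht]

variable {σ : Type*} {c : σ → ℝ} {P : MvPolynomial σ ℝ}

lemma eval_rpow_eq_sum (c : σ → ℝ) (P : MvPolynomial σ ℝ) {t : ℝ} (ht : 0 < t) :
    MvPolynomial.eval (fun i => t ^ c i) P =
      ∑ m ∈ P.support, P.coeff m * t ^ Finsupp.linearCombination ℕ c m := by
  rw [MvPolynomial.eval_eq]
  refine Finset.sum_congr rfl fun m _ => ?_
  rw [Finsupp.linearCombination_apply, Finsupp.sum, Real.rpow_sum_of_pos ht]
  simp only [nsmul_eq_mul, mul_comm _ (c _), Real.rpow_mul_natCast ht.le]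

lemma exists_isEquivalent_eval_rpow (hc : LinearIndependent ℕ c) (hP : P ≠ 0) :
    ∃ m ∈ P.support, (fun t => MvPolynomial.eval (fun i => t ^ c i) P) ~[atTop]
      fun t => P.coeff m * t ^ Finsupp.linearCombination ℕ c m := by
  classical
  obtain ⟨m, hm, hmax⟩ := P.support.exists_max_image (Finsupp.linearCombination ℕ c)
    (MvPolynomial.support_nonempty.2 hP)
  refine ⟨m, hm, ?_⟩
  have hrest : (fun t : ℝ => ∑ k ∈ P.support.erase m,
      P.coeff k * t ^ Finsupp.linearCombination ℕ c k) =o[atTop]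
      fun t => P.coeff m * t ^ Finsupp.linearCombination ℕ c m := by
    refine IsLittleO.fun_sum fun k hk => ?_
    obtain ⟨hkm, hk⟩ := Finset.mem_erase.1 hk
    have hlt := (hmax k hk).lt_of_ne (hc.ne hkm)
    exact ((isLittleO_rpow_rpow_atTop hlt).const_mul_left _).const_mul_right
      (MvPolynomial.mem_support_iff.1 hm)
  refine (IsEquivalent.refl.add_isLittleO hrest).congr_left ?_
  filter_upwards [eventually_gt_atTop 0] with t ht
  rw [eval_rpow_eq_sum c P ht]
  exact Finset.add_sum_erase P.support (fun k => P.coeff k * t ^ Finsupp.linearCombination ℕ c k) hm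

lemma tendsto_log_natCast_atTop : Tendsto (fun n : ℕ => Real.log n) atTop atTop :=
  Real.tendsto_log_atTop.comp tendsto_natCast_atTop_atTop

lemma not_summable_log_rpow (s : ℝ) : ¬ Summable fun n : ℕ => Real.log n ^ s := by
  have hlog : (fun n : ℕ => Real.log n ^ (-s)) =O[atTop] fun n : ℕ => (n : ℝ) := by
    simpa [Function.comp_def] using
      ((isLittleO_log_rpow_rpow_atTop (-s) one_pos).comp_tendsto
        tendsto_natCast_atTop_atTop).isBigO
  have hpos : ∀ᶠ n : ℕ in atTop, 0 < Real.log n :=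
    tendsto_log_natCast_atTop.eventually_gt_atTop 0
  have hinv : (fun n : ℕ => (n : ℝ)⁻¹) =O[atTop] fun n : ℕ => Real.log n ^ s := by
    refine (hlog.inv_rev ?_).congr' .rfl ?_
    · filter_upwards [hpos] with n hn h
      exact absurd h (Real.rpow_pos_of_pos hn _).ne'
    · filter_upwards [hpos] with n hn
      rw [Real.rpow_neg hn.le, inv_inv]
  exact fun h => Real.not_summable_natCast_inv (summable_of_isBigO_nat h hinv)

lemma not_summable_eval_log_rpow (hc : LinearIndependent ℕ c) (hP : P ≠ 0) :
    ¬ Summable fun n : ℕ => MvPolynomial.eval (fun i => Real.log n ^ c i) P := by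
  obtain ⟨m, hm, hequiv⟩ := exists_isEquivalent_eval_rpow hc hP
  have hdom : (fun t : ℝ => t ^ Finsupp.linearCombination ℕ c m) =O[atTop]
      fun t => MvPolynomial.eval (fun i => t ^ c i) P :=
    (isBigO_const_mul_left_iff (MvPolynomial.mem_support_iff.1 hm)).1 hequiv.symm.isBigO
  exact fun h => not_summable_log_rpow _
    (summable_of_isBigO_nat h (hdom.comp_tendsto tendsto_log_natCast_atTop))

end Asymptotics

/-- A sequence of continuous bump functions of norm at most one, each attaining the value one, such
that at most one of them is nonzero at any given point. -/
structure IsDisjointBumpSeq {X : Type*} [TopologicalSpace X] [CompactSpace X]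
    (φ : ℕ → C(X, ℝ)) : Prop where
  subsingleton_support : ∀ x, (Function.support fun n => φ n x).Subsingleton
  norm_le_one : ∀ n, ‖φ n‖ ≤ 1
  exists_eq_one : ∀ n, ∃ x, φ n x = 1

/-- The sequence `n ↦ (log n) ^ s • φ n`: the bumps `φ` damped (for `s < 0`) so slowly that their
norms are not summable. For `s ≠ 0`, its terms `n = 0` and `n = 1` vanish since
`log 0 = log 1 = 0` and `0 ^ s = 0`. -/
noncomputable def logRpowSMul {X : Type*} [TopologicalSpace X] (φ : ℕ → C(X, ℝ)) (s : ℝ) :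
    ℕ → C(X, ℝ) :=
  fun n => Real.log n ^ s • φ n

lemma aeval_logRpowSMul_apply {X σ : Type*} [TopologicalSpace X] (φ : ℕ → C(X, ℝ)) (c : σ → ℝ)
    (P : MvPolynomial σ ℝ) (n : ℕ) (x : X) :
    MvPolynomial.aeval (fun i => logRpowSMul φ (c i)) P n x =
      MvPolynomial.eval (fun i => Real.log n ^ c i * φ n x) P :=
  MvPolynomial.comp_aeval_apply _
    ((ContinuousMap.evalAlgHom ℝ ℝ x).comp (Pi.evalAlgHom ℝ (fun _ => C(X, ℝ)) n)) P

lemma subsingleton_support_aeval_logRpowSMul {X σ : Type*} [TopologicalSpace X] {φ : ℕ → C(X, ℝ)}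
    {P : MvPolynomial σ ℝ} (hP : P.coeff 0 = 0) (c : σ → ℝ) {x : X}
    (hφ : (Function.support fun n => φ n x).Subsingleton) :
    (Function.support fun n =>
      MvPolynomial.aeval (fun i => logRpowSMul φ (c i)) P n x).Subsingleton := by
  refine hφ.anti fun n hn hzero => hn ?_
  simp only [aeval_logRpowSMul_apply, hzero, mul_zero]
  exact aeval_zero_eq_zero_of_coeff_zero (A := ℝ) hP

/-- Anti M-Weierstrass sequences on an arbitrary compact space; `AntiMW a b` is the case
`X = [a, b]`. -/
def IsAntiMWeierstrass {X : Type*} [TopologicalSpace X] [CompactSpace X]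
    (f : ℕ → C(X, ℝ)) : Prop :=
  (∀ x, Summable fun n => |f n x|) ∧
  (∃ S : X → ℝ, TendstoUniformly (fun N x => ∑ n ∈ Finset.range N, f n x) S atTop) ∧
  ¬ Summable fun n => ‖f n‖

section CompactSpace

variable {X : Type*} [TopologicalSpace X] [CompactSpace X]

lemma exists_isDisjointBumpSeq [T2Space X] [Infinite X] :
    ∃ φ : ℕ → C(X, ℝ), IsDisjointBumpSeq φ := by
  obtain ⟨U, hUinf, hUopen, hUdisj⟩ := exists_seq_infinite_isOpen_pairwise_disjoint X
  choose p hp using fun n => (hUinf n).nonempty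
  have hbump : ∀ n, ∃ φ : C(X, ℝ),
      Set.EqOn φ 0 (U n)ᶜ ∧ Set.EqOn φ 1 {p n} ∧ ∀ x, φ x ∈ Set.Icc (0 : ℝ) 1 := fun n =>
    exists_continuous_zero_one_of_isClosed (hUopen n).isClosed_compl isClosed_singleton
      (Set.disjoint_singleton_right.2 (Set.notMem_compl_iff.2 (hp n)))
  choose φ hzero hone hmem using hbump
  refine ⟨φ, fun x n hn m hm => ?_, fun n => ?_, fun n => ⟨p n, hone n rfl⟩⟩
  · have hsupp : ∀ {k}, φ k x ≠ 0 → x ∈ U k := fun hk => Set.not_notMem.1 fun h => hk (hzero _ h)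
    exact hUdisj.eq (Set.not_disjoint_iff.2 ⟨x, hsupp hn, hsupp hm⟩)
  · refine (ContinuousMap.norm_le _ zero_le_one).2 fun x => ?_
    simpa [abs_of_nonneg (hmem n x).1] using (hmem n x).2

lemma isAntiMWeierstrass_of_subsingleton_support {f : ℕ → C(X, ℝ)}
    (hsupp : ∀ x, (Function.support fun n => f n x).Subsingleton)
    (hf : Tendsto f atTop (𝓝 0)) (hnorm : ¬ Summable fun n => ‖f n‖) :
    IsAntiMWeierstrass f :=
  ⟨fun x => (summable_of_hasFiniteSupport (hsupp x).finite).abs,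
    ⟨_, tendstoUniformly_sum_range_of_subsingleton_support hsupp
      (ContinuousMap.tendsto_iff_tendstoUniformly.1 hf)⟩, hnorm⟩

lemma IsAntiMWeierstrass.ne_zero {f : ℕ → C(X, ℝ)} (hf : IsAntiMWeierstrass f) : f ≠ 0 := by
  rintro rfl
  exact hf.2.2 (by simp)

variable {φ : ℕ → C(X, ℝ)} {σ : Type*} {c : σ → ℝ} {P : MvPolynomial σ ℝ}

lemma tendsto_logRpowSMul {K s : ℝ} (hφ : ∀ n, ‖φ n‖ ≤ K) (hs : s < 0) :
    Tendsto (logRpowSMul φ s) atTop (𝓝 0) := by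
  have hlog : Tendsto (fun n : ℕ => Real.log n ^ s) atTop (𝓝 0) := by
    simpa [Function.comp_def] using
      (tendsto_rpow_neg_atTop (neg_pos.2 hs)).comp tendsto_log_natCast_atTop
  exact hlog.zero_smul_isBoundedUnder_le (isBoundedUnder_of ⟨K, hφ⟩)

lemma not_summable_norm_aeval_logRpowSMul (hφ : ∀ n, ∃ x, φ n x = 1)
    (hc : LinearIndependent ℕ c) (hP : P ≠ 0) :
    ¬ Summable fun n => ‖MvPolynomial.aeval (fun i => logRpowSMul φ (c i)) P n‖ := by
  refine fun h => not_summable_eval_log_rpow hc hP (h.of_norm_bounded fun n => ?_)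
  obtain ⟨x, hx⟩ := hφ n
  simpa only [aeval_logRpowSMul_apply, hx, mul_one] using
    (MvPolynomial.aeval (fun i => logRpowSMul φ (c i)) P n).norm_coe_le_norm x

lemma isAntiMWeierstrass_aeval_logRpowSMul (hφ : IsDisjointBumpSeq φ)
    (hc : LinearIndependent ℕ c) (hneg : ∀ i, c i < 0) (hP : P ≠ 0) (hP₀ : P.coeff 0 = 0) :
    IsAntiMWeierstrass (MvPolynomial.aeval (fun i => logRpowSMul φ (c i)) P) := by
  refine isAntiMWeierstrass_of_subsingleton_support
    (fun x => subsingleton_support_aeval_logRpowSMul hP₀ c (hφ.subsingleton_support x)) ?_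
    (not_summable_norm_aeval_logRpowSMul hφ.exists_eq_one hc hP)
  refine (tendsto_aeval_zero_of_coeff_zero hP₀ fun i =>
    tendsto_logRpowSMul hφ.norm_le_one (hneg i)).congr fun n => ?_
  exact (MvPolynomial.comp_aeval_apply _ (Pi.evalAlgHom ℝ (fun _ => C(X, ℝ)) n) P).symm

end CompactSpace

theorem stmt16_general (X : Type*) [TopologicalSpace X] [CompactSpace X] [T2Space X] [Infinite X] :
    ∃ B : Set (ℕ → C(X, ℝ)), #B = 𝔠 ∧
      ∀ (N : ℕ) (P : MvPolynomial (Fin N) ℝ), P ≠ 0 → P.coeff 0 = 0 →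
        ∀ v : Fin N → B, Function.Injective v →
          MvPolynomial.aeval (fun k => (v k : ℕ → C(X, ℝ))) P ≠ 0 ∧
          IsAntiMWeierstrass (MvPolynomial.aeval (fun k => (v k : ℕ → C(X, ℝ))) P) := by
  obtain ⟨φ, hφ⟩ := exists_isDisjointBumpSeq (X := X)
  obtain ⟨ι, c, hcard, hc, hneg⟩ := exists_linearIndependent_nat_neg_card_eq_continuum
  let f : ι → ℕ → C(X, ℝ) := fun i => logRpowSMul φ (c i)
  have hinj : Function.Injective f := injective_of_forall_aeval_ne_zero (R := ℝ) fun P hP hP₀ =>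
    (isAntiMWeierstrass_aeval_logRpowSMul hφ hc hneg hP hP₀).ne_zero
  refine ⟨Set.range f, by simpa [hcard] using mk_range_eq_of_injective hinj,
    fun N P hP hP₀ v hv => ?_⟩
  choose j hj using fun k => (v k).2
  have hjinj : Function.Injective j := fun k l hkl =>
    hv (Subtype.ext (by rw [← hj k, ← hj l, hkl]))
  have hanti := isAntiMWeierstrass_aeval_logRpowSMul hφ (hc.comp j hjinj)
    (fun k => hneg (j k)) hP hP₀
  rw [← funext hj]
  exact ⟨hanti.ne_zero, hanti⟩

/-- 𝒜ℳ𝒲 is strongly 𝔠-algebrable: there is a set `B` of cardinality continuum in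
`C([a,b])^ℕ` (a commutative real algebra under coordinatewise operations) such that
every nonzero polynomial without constant term evaluated at distinct elements of `B`
yields a nonzero Anti M-Weierstrass sequence. -/
theorem stmt16 (a b : ℝ) (hab : a < b) :
    ∃ B : Set (ℕ → C(Set.Icc a b, ℝ)),
      Cardinal.mk B = Cardinal.continuum ∧
      ∀ (N : ℕ) (P : MvPolynomial (Fin N) ℝ), P ≠ 0 →
        MvPolynomial.coeff 0 P = 0 →
        ∀ v : Fin N → B, Function.Injective v →
          MvPolynomial.aeval (fun k => (v k : ℕ → C(Set.Icc a b, ℝ))) P ≠ 0 ∧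
          AntiMW a b (MvPolynomial.aeval (fun k => (v k : ℕ → C(Set.Icc a b, ℝ))) P) := by
  have : Infinite (Set.Icc a b) := (Set.Icc_infinite hab).to_subtype
  exact stmt16_general (Set.Icc a b)
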